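/- Assume (A,B) is controllable, (A,C) is observable with observability index ℓ ≥ 2, rank(C) = p < n, and Assumption 1 holds. Let w = (u; y) be a trajectory of length T ≥ (n_c−1)(ℓ+1) + n + ℓ + 3 of the LTI system with the mosaic input matrix 𝓗_{[0,n+ℓ+2]}(u) of rank m(n+ℓ+3), and let R ∈ ℝ^{(p(ℓ+2)−n)×q(ℓ+2)} be any matrix whose rows form a basis of the left kernel of 𝓗_{ℓ+2}(w). For L ≥ ℓ+2, let Γ ∈ ℝ^{(pL−n)×qL} be the shift matrix built from R (with d = ℓ+2), assume rank(Γ) = pL − n, and let P ∈ ℝ^{qL×(mL+n)} be a matrix whose columns form a basis of the kernel of Γ. Then a vector w̄ ∈ ℝ^{qL} belongs to the restricted behavior 𝓑|_L if and only if there exists β ∈ ℝ^{mL+n} with P·β = w̄. -/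

import Mathlib

/-!
The restricted behavior `𝓑|_L` is the range of the linear map `trajMap` sending an initial state
and an input sequence to the stacked trajectory (`mem_range_trajMap`).  Its domain has dimension
`mL + n`, and the map is injective for `L ≥ ℓ` by observability (`trajMap_injective`).

* Window length `d = ℓ + 2`: the left kernel of the Hankel matrix `H` of the data is spanned by the
  `pd − n` rows of `R`, so `rank H ≥ qd − (pd − n) = md + n`.  The columns of `H` are windows of a trajectory, hence
  lie in `𝓑|_d`, which has dimension at most `md + n`.  So the column space of `H` is all of
  `𝓑|_d`, and `R * H = 0` gives that `R` annihilates `𝓑|_d` (`mulVec_eq_zero_of_isTraj`).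
* Length `L`: every row of `Γ` is a row of `R` applied to a length-`d` window, so `𝓑|_L ⊆ ker Γ`
  (`shiftMat_mulVec_eq_zero`).  Both spaces have dimension `mL + n`, by injectivity of `trajMap` and
  by `rank Γ = pL − n`, so they coincide; and `ker Γ` is the column space of `P`.
-/

open Matrix

/-- The input part `u(t) ∈ ℝ^m` of a combined variable `w(t) = (u(t); y(t)) ∈ ℝ^{m+p}`. -/
def uPart (m p : ℕ) (w : ℕ → Fin (m + p) → ℝ) (t : ℕ) : Fin m → ℝ :=
  fun i => w t (Fin.castAdd p i)

/-- The output part `y(t) ∈ ℝ^p` of a combined variable `w(t) = (u(t); y(t)) ∈ ℝ^{m+p}`. -/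
def yPart (m p : ℕ) (w : ℕ → Fin (m + p) → ℝ) (t : ℕ) : Fin p → ℝ :=
  fun j => w t (Fin.natAdd m j)

/-- `w = (u; y)` is a trajectory of length `T` of the LTI system `(A,B,C,D)`:
there is a state sequence `x` with `x(t+1) = A x(t) + B u(t)` for `t+1 < T` and
`y(t) = C x(t) + D u(t)` for `t < T`. -/
def IsTraj (m p n : ℕ) (A : Matrix (Fin n) (Fin n) ℝ) (B : Matrix (Fin n) (Fin m) ℝ)
    (C : Matrix (Fin p) (Fin n) ℝ) (D : Matrix (Fin p) (Fin m) ℝ)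
    (T : ℕ) (w : ℕ → Fin (m + p) → ℝ) : Prop :=
  ∃ x : ℕ → Fin n → ℝ,
    (∀ t, t + 1 < T → x (t + 1) = A *ᵥ x t + B *ᵥ uPart m p w t) ∧
    (∀ t, t < T → yPart m p w t = C *ᵥ x t + D *ᵥ uPart m p w t)

/-- The depth-`L` Hankel matrix of a sequence `w : {0,…,T−1} → ℝ^q`.  Its rows are indexed
by pairs `(b, i)` (block position `b ∈ {0,…,L−1}` and coordinate `i ∈ {0,…,q−1}`) and its
`j`-th column is the stacked vector `(w(j); …; w(j+L−1))`. -/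
def Hankel (q L T : ℕ) (w : ℕ → Fin q → ℝ) : Matrix (Fin L × Fin q) (Fin (T - L + 1)) ℝ :=
  fun bi j => w ((j : ℕ) + (bi.1 : ℕ)) bi.2

/-- The restricted behavior `𝓑|_L ⊆ ℝ^{qL}`: all stacked vectors `(w(0); …; w(L−1))` of
trajectories `w` of length `L`. -/
def Behavior (m p n : ℕ) (A : Matrix (Fin n) (Fin n) ℝ) (B : Matrix (Fin n) (Fin m) ℝ)
    (C : Matrix (Fin p) (Fin n) ℝ) (D : Matrix (Fin p) (Fin m) ℝ) (L : ℕ) :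
    Set (Fin L × Fin (m + p) → ℝ) :=
  { v | ∃ w : ℕ → Fin (m + p) → ℝ, IsTraj m p n A B C D L w ∧
      ∀ (t : Fin L) (i : Fin (m + p)), v (t, i) = w (t : ℕ) i }

/-- The order-`k` observability matrix `[C; CA; …; CA^{k−1}]`. -/
def obsMat (p n : ℕ) (A : Matrix (Fin n) (Fin n) ℝ) (C : Matrix (Fin p) (Fin n) ℝ) (k : ℕ) :
    Matrix (Fin k × Fin p) (Fin n) ℝ :=
  fun ri => (C * A ^ (ri.1 : ℕ)) ri.2

/-- `(A,C)` is observable with observability index `ℓ`: `[C; CA; …; CA^{ℓ−1}]` has rank `n`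
and `ℓ` is the smallest such integer. -/
def ObsIndex (p n : ℕ) (A : Matrix (Fin n) (Fin n) ℝ) (C : Matrix (Fin p) (Fin n) ℝ)
    (ℓ : ℕ) : Prop :=
  (obsMat p n A C ℓ).rank = n ∧ ∀ k < ℓ, (obsMat p n A C k).rank ≠ n

/-- The controllability matrix `[B, AB, …, A^{n−1}B]` (columns indexed by pairs). -/
def ctrbMat (m n : ℕ) (A : Matrix (Fin n) (Fin n) ℝ) (B : Matrix (Fin n) (Fin m) ℝ) :
    Matrix (Fin n) (Fin n × Fin m) ℝ :=
  fun i c => (A ^ (c.1 : ℕ) * B) i c.2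

/-- `(A,B)` is controllable: the controllability matrix has rank `n`. -/
def Controllable (m n : ℕ) (A : Matrix (Fin n) (Fin n) ℝ) (B : Matrix (Fin n) (Fin m) ℝ) :
    Prop :=
  (ctrbMat m n A B).rank = n

/-- The matrix `𝓞_s = [C; CA; …; CA^{ℓ−2}; CA^{ℓ+1}] ∈ ℝ^{pℓ×n}` of Assumption 1. -/
def obsSMat (p n ℓ : ℕ) (A : Matrix (Fin n) (Fin n) ℝ) (C : Matrix (Fin p) (Fin n) ℝ) :
    Matrix (Fin ℓ × Fin p) (Fin n) ℝ :=
  fun ri => (C * A ^ (if (ri.1 : ℕ) < ℓ - 1 then (ri.1 : ℕ) else ℓ + 1)) ri.2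

/-- The mosaic input matrix `𝓗_{[0,n+ℓ+2]}(u) ∈ ℝ^{m(n+ℓ+3)×n_c}`: its `j`-th column is
the stacked vector `(u(j(ℓ+1)); u(j(ℓ+1)+1); …; u(j(ℓ+1)+n+ℓ+2))`. -/
def mosaicInput (m n ℓ nc : ℕ) (u : ℕ → Fin m → ℝ) :
    Matrix (Fin (n + ℓ + 3) × Fin m) (Fin nc) ℝ :=
  fun ri j => u ((j : ℕ) * (ℓ + 1) + (ri.1 : ℕ)) ri.2

/-- The matrix `H̄` with window offset `s` and deleted output position `δ`: its `j`-th
column is the stacked window `(w(s_j); …; w(s_j+ℓ+1))` with `s_j = j(ℓ+1)+s`, keeping all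
inputs and deleting the output block at window position `δ`. -/
def Hbar (m p ℓ nc : ℕ) (s δ : ℕ) (u : ℕ → Fin m → ℝ) (y : ℕ → Fin p → ℝ) :
    Matrix ((Fin (ℓ + 2) × Fin m) ⊕ (Fin (ℓ + 1) × Fin p)) (Fin nc) ℝ :=
  fun ri j =>
    match ri with
    | Sum.inl ti => u ((j : ℕ) * (ℓ + 1) + s + (ti.1 : ℕ)) ti.2
    | Sum.inr ti => y ((j : ℕ) * (ℓ + 1) + s +
        (if (ti.1 : ℕ) < δ then (ti.1 : ℕ) else (ti.1 : ℕ) + 1)) ti.2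

/-- The shift matrix `Γ ∈ ℝ^{(g+(L−d)p)×qL}` built from `R ∈ ℝ^{g×qd}`: its first `g` rows
are the rows of `R` each followed by `q(L−d)` zeros; for each `k = 1,…,L−d`, the next `p`
rows are the first `p` rows of `R` preceded by `qk` zeros and followed by `q(L−d−k)` zeros.
Rows are indexed by `Fin (g + (L−d)*p)`; columns by pairs (block position, coordinate). -/
def shiftMat (q d L g p : ℕ) (R : Matrix (Fin g) (Fin d × Fin q) ℝ) :
    Matrix (Fin (g + (L - d) * p)) (Fin L × Fin q) ℝ :=
  fun r c =>
    if hr : (r : ℕ) < g then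
      -- row `r` of `R` followed by zeros
      if hb : (c.1 : ℕ) < d then R ⟨(r : ℕ), hr⟩ (⟨(c.1 : ℕ), hb⟩, c.2) else 0
    else
      -- row `s` (one of the first `p` rows of `R`), shifted by `k` block positions
      (if h : ((r : ℕ) - g) / p + 1 ≤ (c.1 : ℕ) ∧
              (c.1 : ℕ) - (((r : ℕ) - g) / p + 1) < d ∧ ((r : ℕ) - g) % p < g then
        R ⟨((r : ℕ) - g) % p, h.2.2⟩ (⟨(c.1 : ℕ) - (((r : ℕ) - g) / p + 1), h.2.1⟩, c.2)
      else 0)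

/-! ### Parametrization of the restricted behavior -/

noncomputable section

/-- The input at time `t` as a linear function of (initial state, inputs on `{0,…,L−1}`), extended
by zero for `t ≥ L`. -/
def inputMap (m n L t : ℕ) : ((Fin n → ℝ) × (Fin L → Fin m → ℝ)) →ₗ[ℝ] (Fin m → ℝ) :=
  if h : t < L then LinearMap.proj ⟨t, h⟩ ∘ₗ LinearMap.snd ℝ _ _ else 0

/-- The state at time `t` as a linear function of (initial state, inputs on `{0,…,L−1}`). -/
def stateMap (m n L : ℕ) (A : Matrix (Fin n) (Fin n) ℝ) (B : Matrix (Fin n) (Fin m) ℝ) :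
    ℕ → ((Fin n → ℝ) × (Fin L → Fin m → ℝ)) →ₗ[ℝ] (Fin n → ℝ)
  | 0 => LinearMap.fst ℝ _ _
  | t + 1 => A.mulVecLin ∘ₗ stateMap m n L A B t + B.mulVecLin ∘ₗ inputMap m n L t

/-- The combined variable `w(t) = (u(t); y(t))` as a linear function of
(initial state, inputs on `{0,…,L−1}`). -/
def outMap (m p n L : ℕ) (A : Matrix (Fin n) (Fin n) ℝ) (B : Matrix (Fin n) (Fin m) ℝ)
    (C : Matrix (Fin p) (Fin n) ℝ) (D : Matrix (Fin p) (Fin m) ℝ) (t : ℕ) :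
    ((Fin n → ℝ) × (Fin L → Fin m → ℝ)) →ₗ[ℝ] (Fin (m + p) → ℝ) :=
  LinearMap.pi fun i => Fin.addCases (motive := fun _ => _ →ₗ[ℝ] ℝ)
    (fun i => LinearMap.proj i ∘ₗ inputMap m n L t)
    (fun j => LinearMap.proj j ∘ₗ
      (C.mulVecLin ∘ₗ stateMap m n L A B t + D.mulVecLin ∘ₗ inputMap m n L t)) i

/-- The stacked trajectory of length `L` generated by an initial state and an input sequence. -/
def trajMap (m p n L : ℕ) (A : Matrix (Fin n) (Fin n) ℝ) (B : Matrix (Fin n) (Fin m) ℝ)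
    (C : Matrix (Fin p) (Fin n) ℝ) (D : Matrix (Fin p) (Fin m) ℝ) :
    ((Fin n → ℝ) × (Fin L → Fin m → ℝ)) →ₗ[ℝ] (Fin L × Fin (m + p) → ℝ) :=
  LinearMap.pi fun c => LinearMap.proj c.2 ∘ₗ outMap m p n L A B C D c.1

end

lemma finrank_trajMap_domain (m n L : ℕ) :
    Module.finrank ℝ ((Fin n → ℝ) × (Fin L → Fin m → ℝ)) = n + L * m := by
  rw [Module.finrank_prod, Module.finrank_fintype_fun_eq_card, Module.finrank_pi_fintype]
  simp

lemma uPart_outMap (m p n L : ℕ) (A : Matrix (Fin n) (Fin n) ℝ) (B : Matrix (Fin n) (Fin m) ℝ)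
    (C : Matrix (Fin p) (Fin n) ℝ) (D : Matrix (Fin p) (Fin m) ℝ) (z) (t : ℕ) :
    uPart m p (fun t => outMap m p n L A B C D t z) t = inputMap m n L t z := by
  ext i
  simp [uPart, outMap]

lemma yPart_outMap (m p n L : ℕ) (A : Matrix (Fin n) (Fin n) ℝ) (B : Matrix (Fin n) (Fin m) ℝ)
    (C : Matrix (Fin p) (Fin n) ℝ) (D : Matrix (Fin p) (Fin m) ℝ) (z) (t : ℕ) :
    yPart m p (fun t => outMap m p n L A B C D t z) t =
      C *ᵥ stateMap m n L A B t z + D *ᵥ inputMap m n L t z := by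
  ext i
  simp [yPart, outMap]

lemma mem_range_trajMap (m p n L : ℕ) (A : Matrix (Fin n) (Fin n) ℝ)
    (B : Matrix (Fin n) (Fin m) ℝ) (C : Matrix (Fin p) (Fin n) ℝ) (D : Matrix (Fin p) (Fin m) ℝ)
    (v : Fin L × Fin (m + p) → ℝ) :
    v ∈ LinearMap.range (trajMap m p n L A B C D) ↔ v ∈ Behavior m p n A B C D L := by
  constructor
  · rintro ⟨z, rfl⟩
    refine ⟨fun t => outMap m p n L A B C D t z, ⟨fun t => stateMap m n L A B t z, ?_, ?_⟩, ?_⟩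
    · intro t _
      rw [uPart_outMap]
      simp [stateMap]
    · intro t _
      rw [uPart_outMap, yPart_outMap]
    · intro t i
      simp [trajMap]
  · rintro ⟨w, ⟨x, hx, hy⟩, hv⟩
    let z : (Fin n → ℝ) × (Fin L → Fin m → ℝ) := (x 0, fun t => uPart m p w t)
    have hin : ∀ t, t < L → inputMap m n L t z = uPart m p w t := by
      intro t ht
      simp [inputMap, ht, z]
    have hst : ∀ t, t < L → stateMap m n L A B t z = x t := by
      intro t
      induction t with
      | zero => intro _; simp [stateMap, z]
      | succ t ih =>
        intro ht
        rw [hx t ht, ← ih (by omega), ← hin t (by omega)]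
        simp [stateMap]
    refine ⟨z, ?_⟩
    ext ⟨t, i⟩
    rw [hv]
    refine Fin.addCases (fun i => ?_) (fun j => ?_) i
    · have := congrFun (hin t t.2) i
      have h2 := congrFun (uPart_outMap m p n L A B C D z t) i
      exact h2.trans this
    · have h2 := congrFun (yPart_outMap m p n L A B C D z t) j
      rw [hst t t.2, hin t t.2, ← hy t t.2] at h2
      exact h2

lemma mulVec_injective_of_rank {ι : Type*} [Fintype ι] {n : ℕ} (M : Matrix ι (Fin n) ℝ)
    (h : M.rank = n) (x : Fin n → ℝ) (hx : M *ᵥ x = 0) : x = 0 := by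
  have h1 := LinearMap.finrank_range_add_finrank_ker M.mulVecLin
  rw [← Matrix.rank, h, Module.finrank_fin_fun] at h1
  have h2 : LinearMap.ker M.mulVecLin = ⊥ := Submodule.finrank_eq_zero.mp (by omega)
  have h3 : x ∈ LinearMap.ker M.mulVecLin := by simpa using hx
  simpa [h2] using h3

/-- A zero trajectory has zero inputs, so its state is `A ^ t x(0)`, and observability over `ℓ ≤ L`
steps forces `x(0) = 0`. -/
lemma trajMap_injective (m p n ℓ L : ℕ) (A : Matrix (Fin n) (Fin n) ℝ)
    (B : Matrix (Fin n) (Fin m) ℝ) (C : Matrix (Fin p) (Fin n) ℝ) (D : Matrix (Fin p) (Fin m) ℝ)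
    (hobs : (obsMat p n A C ℓ).rank = n) (hL : ℓ ≤ L) :
    Function.Injective (trajMap m p n L A B C D) := by
  rw [← LinearMap.ker_eq_bot, LinearMap.ker_eq_bot']
  intro z hz
  have hout : ∀ t, t < L → outMap m p n L A B C D t z = 0 := by
    intro t ht
    ext i
    exact congrFun hz (⟨t, ht⟩, i)
  have hin : ∀ t, t < L → inputMap m n L t z = 0 := by
    intro t ht
    rw [← uPart_outMap m p n L A B C D z t]
    ext i
    simp [uPart, hout t ht]
  have hst : ∀ t, t < L → stateMap m n L A B t z = (A ^ t) *ᵥ z.1 := by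
    intro t
    induction t with
    | zero => intro _; simp [stateMap]
    | succ t ih =>
      intro ht
      simp [stateMap, ih (by omega), hin t (by omega), pow_succ']
  have hy : ∀ t, t < L → (C * A ^ t) *ᵥ z.1 = 0 := by
    intro t ht
    have h := yPart_outMap m p n L A B C D z t
    rw [hin t ht, hst t ht] at h
    rw [← Matrix.mulVec_mulVec]
    simp only [mulVec_zero, add_zero] at h
    rw [← h]
    ext i
    simp [yPart, hout t ht]
  have hx : z.1 = 0 := by
    refine mulVec_injective_of_rank _ hobs _ ?_
    ext ⟨t, i⟩
    exact congrFun (hy t (by omega)) i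
  refine Prod.ext hx ?_
  ext t i
  have := congrFun (hin t t.2) i
  simpa [inputMap] using this

/-! ### Windows of trajectories and the Hankel matrix -/

lemma IsTraj.window {m p n : ℕ} {A : Matrix (Fin n) (Fin n) ℝ} {B : Matrix (Fin n) (Fin m) ℝ}
    {C : Matrix (Fin p) (Fin n) ℝ} {D : Matrix (Fin p) (Fin m) ℝ} {T : ℕ}
    {w : ℕ → Fin (m + p) → ℝ} (h : IsTraj m p n A B C D T w) (k d : ℕ) (hk : k + d ≤ T) :
    IsTraj m p n A B C D d (fun t => w (k + t)) := by
  obtain ⟨x, hx, hy⟩ := h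
  exact ⟨fun t => x (k + t), fun t ht => hx (k + t) (by omega), fun t ht => hy (k + t) (by omega)⟩

/-- If the rows of `R` are `pd − n` vectors spanning the left kernel of the depth-`d` Hankel matrix
of a trajectory, then the columns of that matrix span `𝓑|_d`, so `R` annihilates every trajectory
of length `d`. -/
lemma mulVec_eq_zero_of_isTraj {m p n d T : ℕ} {A : Matrix (Fin n) (Fin n) ℝ}
    {B : Matrix (Fin n) (Fin m) ℝ} {C : Matrix (Fin p) (Fin n) ℝ} {D : Matrix (Fin p) (Fin m) ℝ}
    (hnd : n ≤ p * d) (hdT : d ≤ T) {w : ℕ → Fin (m + p) → ℝ} (hw : IsTraj m p n A B C D T w)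
    (R : Matrix (Fin (p * d - n)) (Fin d × Fin (m + p)) ℝ)
    (hRH : R * Hankel (m + p) d T w = 0)
    (hRspan : ∀ z : Fin d × Fin (m + p) → ℝ,
      z ᵥ* Hankel (m + p) d T w = 0 → z ∈ Submodule.span ℝ (Set.range R))
    (v : ℕ → Fin (m + p) → ℝ) (hv : IsTraj m p n A B C D d v) :
    R *ᵥ (fun c => v c.1 c.2) = 0 := by
  set H := Hankel (m + p) d T w
  have hle : LinearMap.range H.mulVecLin ≤ LinearMap.range (trajMap m p n d A B C D) := by
    rw [Matrix.range_mulVecLin, Submodule.span_le]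
    rintro _ ⟨j, rfl⟩
    refine (mem_range_trajMap ..).mpr ⟨_, hw.window j d (by omega), fun t i => rfl⟩
  have hker : Module.finrank ℝ (LinearMap.ker Hᵀ.mulVecLin) ≤ p * d - n := by
    calc _ ≤ Module.finrank ℝ (Submodule.span ℝ (Set.range R)) := by
          refine Submodule.finrank_mono fun z hz => hRspan z ?_
          simpa using hz
      _ ≤ _ := by
        simpa [Set.finrank] using finrank_range_le_card (R := ℝ) (R : Fin (p * d - n) → _)
  have hrank : Module.finrank ℝ (LinearMap.range (trajMap m p n d A B C D)) ≤
      Module.finrank ℝ (LinearMap.range H.mulVecLin) := by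
    have h1 := LinearMap.finrank_range_le (trajMap m p n d A B C D)
    rw [finrank_trajMap_domain] at h1
    have h2 := LinearMap.finrank_range_add_finrank_ker Hᵀ.mulVecLin
    rw [← Matrix.rank, Matrix.rank_transpose, Module.finrank_fintype_fun_eq_card,
      Fintype.card_prod, Fintype.card_fin, Fintype.card_fin, Matrix.rank, mul_add,
      mul_comm d p] at h2
    omega
  have heq := Submodule.eq_of_le_of_finrank_le hle hrank
  have hmem : (fun c : Fin d × Fin (m + p) => v c.1 c.2) ∈ LinearMap.range H.mulVecLin := by
    rw [heq, mem_range_trajMap]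
    exact ⟨v, hv, fun _ _ => rfl⟩
  obtain ⟨c, hc⟩ := hmem
  rw [← hc, Matrix.mulVecLin_apply, Matrix.mulVec_mulVec, hRH, Matrix.zero_mulVec]

/-! ### The shift matrix -/

/-- Each row of the shift matrix is a row of `R` acting on a window of length `d`; hence a
sequence all of whose windows are annihilated by `R` lies in the kernel. -/
lemma shiftMat_mulVec_eq_zero {q d L g p : ℕ} (hp : 1 ≤ p) (hpg : p ≤ g) (hdL : d ≤ L)
    (R : Matrix (Fin g) (Fin d × Fin q) ℝ) (v : ℕ → Fin q → ℝ)
    (hv : ∀ k, k + d ≤ L → R *ᵥ (fun c => v (k + c.1) c.2) = 0) :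
    shiftMat q d L g p R *ᵥ (fun c => v c.1 c.2) = 0 := by
  -- a row of the shift matrix that is the row `s` of `R` moved right by `k` blocks kills `v`
  have key : ∀ (r : Fin (g + (L - d) * p)) (k : ℕ) (hk : k + d ≤ L) (s : Fin g),
      (∀ c : Fin L × Fin q, (¬ (k ≤ c.1 ∧ (c.1 : ℕ) - k < d)) → shiftMat q d L g p R r c = 0) →
      (∀ (b : Fin d) (i : Fin q),
        shiftMat q d L g p R r (⟨k + b, by omega⟩, i) = R s (b, i)) →
      (shiftMat q d L g p R *ᵥ (fun c => v c.1 c.2)) r = 0 := by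
    intro r k hk s h0 h1
    refine Eq.trans (Eq.symm ?_) (congrFun (hv k hk) s)
    refine Fintype.sum_of_injective
      (fun c : Fin d × Fin q => ((⟨k + c.1, by omega⟩ : Fin L), c.2)) ?_ _ _ ?_ ?_
    · rintro ⟨b, i⟩ ⟨b', i'⟩ h
      simp only [Prod.mk.injEq, Fin.mk.injEq] at h
      exact Prod.ext (Fin.ext (by simpa using h.1)) h.2
    · rintro ⟨b, i⟩ hc
      refine mul_eq_zero_of_left (h0 (b, i) ?_) _
      rintro ⟨hb, hb'⟩
      exact hc ⟨(⟨b - k, hb'⟩, i), Prod.ext (Fin.ext (by simp at hb ⊢; omega)) rfl⟩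
    · rintro ⟨b, i⟩
      exact congrArg (· * v (k + b) i) (h1 b i).symm
  ext r
  by_cases hr : (r : ℕ) < g
  · refine key r 0 (by omega) ⟨r, hr⟩ ?_ ?_
    · intro c hc
      have : ¬ (c.1 : ℕ) < d := by omega
      simp [shiftMat, hr, this]
    · intro b i
      simp [shiftMat, hr]
  · have hmod : ((r : ℕ) - g) % p < g := (Nat.mod_lt _ hp).trans_le hpg
    have hdiv : ((r : ℕ) - g) / p < L - d := by
      rw [Nat.div_lt_iff_lt_mul hp]
      omega
    refine key r (((r : ℕ) - g) / p + 1) (by omega) ⟨((r : ℕ) - g) % p, hmod⟩ ?_ ?_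
    · intro c hc
      rw [shiftMat, dif_neg hr, dif_neg]
      exact fun h => hc ⟨h.1, h.2.1⟩
    · intro b i
      rw [shiftMat, dif_neg hr, dif_pos ⟨by simp, by simp, hmod⟩]
      simp

/-- Under controllability, observability with index `ℓ ≥ 2`,
`rank C = p < n`, Assumption 1 and full rank of the mosaic input matrix, let `R` be a
matrix whose rows form a basis of the left kernel of `𝓗_{ℓ+2}(w)`, let `Γ` be the shift
matrix built from `R` (with `d = ℓ+2`) for `L ≥ ℓ+2`, assume `rank Γ = pL − n`, and let
`P` be a matrix whose columns form a basis of `ker Γ`.  Then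
`w̄ ∈ 𝓑|_L ↔ ∃ β, P·β = w̄`. -/
theorem stmt15 (m p n ℓ : ℕ) (hm : 1 ≤ m) (hp : 1 ≤ p) (hn : 1 ≤ n) (hl : 2 ≤ ℓ)
    (A : Matrix (Fin n) (Fin n) ℝ) (B : Matrix (Fin n) (Fin m) ℝ)
    (C : Matrix (Fin p) (Fin n) ℝ) (D : Matrix (Fin p) (Fin m) ℝ)
    (hctrb : Controllable m n A B)
    (hobs : ObsIndex p n A C ℓ)
    (hC : C.rank = p) (hpn : p < n)
    (hassmp : (obsSMat p n ℓ A C).rank = n)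
    (nc T : ℕ) (hT : (nc - 1) * (ℓ + 1) + n + ℓ + 3 ≤ T)
    (w : ℕ → Fin (m + p) → ℝ) (hw : IsTraj m p n A B C D T w)
    (hmosaic : (mosaicInput m n ℓ nc (uPart m p w)).rank = m * (n + ℓ + 3))
    (R : Matrix (Fin (p * (ℓ + 2) - n)) (Fin (ℓ + 2) × Fin (m + p)) ℝ)
    (hRH : R * Hankel (m + p) (ℓ + 2) T w = 0)
    (hRrank : R.rank = p * (ℓ + 2) - n)
    (hRspan : ∀ z : Fin (ℓ + 2) × Fin (m + p) → ℝ,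
      z ᵥ* Hankel (m + p) (ℓ + 2) T w = 0 → z ∈ Submodule.span ℝ (Set.range R))
    (L : ℕ) (hL : ℓ + 2 ≤ L)
    (hΓrank : (shiftMat (m + p) (ℓ + 2) L (p * (ℓ + 2) - n) p R).rank = p * L - n)
    (P : Matrix (Fin L × Fin (m + p)) (Fin (m * L + n)) ℝ)
    (hΓP : shiftMat (m + p) (ℓ + 2) L (p * (ℓ + 2) - n) p R * P = 0)
    (hPcols : LinearIndependent ℝ (fun j : Fin (m * L + n) => fun i => P i j))
    (hPspan : ∀ v : Fin L × Fin (m + p) → ℝ,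
      shiftMat (m + p) (ℓ + 2) L (p * (ℓ + 2) - n) p R *ᵥ v = 0 →
        ∃ β : Fin (m * L + n) → ℝ, P *ᵥ β = v) :
    ∀ wbar : Fin L × Fin (m + p) → ℝ,
      wbar ∈ Behavior m p n A B C D L ↔
        ∃ β : Fin (m * L + n) → ℝ, P *ᵥ β = wbar := by
  have hnl : n ≤ p * ℓ := by
    have h := Matrix.rank_le_card_height (obsMat p n A C ℓ)
    rw [hobs.1, Fintype.card_prod, Fintype.card_fin, Fintype.card_fin] at h
    linarith [mul_comm ℓ p]
  have hnd : n + 2 * p ≤ p * (ℓ + 2) := by linarith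
  have hnL : p * (ℓ + 2) ≤ p * L := Nat.mul_le_mul_left p hL
  have hdT : ℓ + 2 ≤ T := by omega
  set Γ := shiftMat (m + p) (ℓ + 2) L (p * (ℓ + 2) - n) p R
  have hle : LinearMap.range (trajMap m p n L A B C D) ≤ LinearMap.ker Γ.mulVecLin := by
    intro v hv
    obtain ⟨x, hx, hvx⟩ := (mem_range_trajMap ..).mp hv
    have hvx' : v = fun c => x c.1 c.2 := funext fun c => hvx c.1 c.2
    rw [LinearMap.mem_ker, Matrix.mulVecLin_apply, hvx']
    exact shiftMat_mulVec_eq_zero hp (by omega) hL R x fun k hk =>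
      mulVec_eq_zero_of_isTraj (by omega) hdT hw R hRH hRspan _ (hx.window k (ℓ + 2) hk)
  have hfin : Module.finrank ℝ (LinearMap.ker Γ.mulVecLin) ≤
      Module.finrank ℝ (LinearMap.range (trajMap m p n L A B C D)) := by
    rw [LinearMap.finrank_range_of_inj (trajMap_injective m p n ℓ L A B C D hobs.1 (by omega)),
      finrank_trajMap_domain]
    have h2 := LinearMap.finrank_range_add_finrank_ker Γ.mulVecLin
    rw [← Matrix.rank, hΓrank, Module.finrank_fintype_fun_eq_card,
      Fintype.card_prod, Fintype.card_fin, Fintype.card_fin] at h2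
    have h3 : L * (m + p) = L * m + p * L := by ring
    omega
  have heq := Submodule.eq_of_le_of_finrank_le hle hfin
  intro wbar
  rw [← mem_range_trajMap, heq, LinearMap.mem_ker, Matrix.mulVecLin_apply]
  refine ⟨hPspan wbar, ?_⟩
  rintro ⟨β, rfl⟩
  rw [Matrix.mulVec_mulVec, hΓP, Matrix.zero_mulVec]
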